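/- arXiv:1901.06329 — 2 statements merged into one kernel-verified Lean document; each statement's English description precedes it below -/
import Mathlib

section
/- Let ψ₀ : ℝ → [0,1] be a smooth even function supported in [−2,2] with ψ₀ ≡ 1 on [−1,1]. There exists a constant C > 0 such that for all integers j ≥ k ≥ 0, all y ∈ [0,2π), all t ∈ ℝ with |t| ≤ 2·2^{−j}, and all ν ∈ ℤ with |ν| ≥ 100, one has | ∫_ℝ ψ₀²(η/2^k) e^{i[(y − 2πν)η − η² t]} dη | ≤ C/ν². -/
/-!
The estimate is the method of non-stationary phase. Write `N = 2^k`, `B = y - 2πν` and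
`p(η) = B η - t η²`. Since `|B| ≥ 6|ν|`, while `|2tη| ≤ 12` for `|η| ≤ 3N`, the phase satisfies
`|p'| ≥ 5|ν|` on `[-3N, 3N]`, an interval containing the support of the amplitude `ψ²(η/N)` in its
interior, so that all boundary terms vanish. Two integrations by parts, carried out at once in
`norm_integral_quadratic_phase_le`, replace the amplitude by a remainder involving two further
powers of `1/p'`; each derivative of the amplitude gains `1/N`, and so does `p'' = -2t`.
Hence the remainder is `O(ν⁻² N⁻²)` (`remainder_le`), and integrating it over
an interval of length `6N` gives `O(ν⁻² N⁻¹)`.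
-/

open Complex MeasureTheory Filter Topology Set
open scoped Real BigOperators ENNReal

noncomputable section

/-- A (distributional) function on the torus `𝕋² = ℝ²/(2πℤ)²` is represented by its
sequence of Fourier coefficients, indexed by `ℤ × ℤ`. -/
abbrev CoefSeq : Type := ℤ × ℤ → ℂ

/-- Squared `L²(𝕋²)` norm, via Parseval's identity. -/
def l2NormSq (a : CoefSeq) : ℝ := ∑' mn : ℤ × ℤ, ‖a mn‖ ^ 2

/-- The `L²(𝕋²)` norm. -/
def l2Norm (a : CoefSeq) : ℝ := Real.sqrt (l2NormSq a)

/-- The Sobolev weight `(1 + m² + n²)^s`. -/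
def sobWeight (s : ℝ) (mn : ℤ × ℤ) : ℝ :=
  (1 + (mn.1 : ℝ) ^ 2 + (mn.2 : ℝ) ^ 2) ^ s

/-- Squared `H^s(𝕋²)` norm: `Σ (1+m²+n²)^s |ĝ(m,n)|²`. -/
def hsNormSq (s : ℝ) (a : CoefSeq) : ℝ := ∑' mn : ℤ × ℤ, sobWeight s mn * ‖a mn‖ ^ 2

/-- The `H^s(𝕋²)` norm. -/
def hsNorm (s : ℝ) (a : CoefSeq) : ℝ := Real.sqrt (hsNormSq s a)

/-- Membership in `H^s(𝕋²)`. -/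
def InHs (s : ℝ) (a : CoefSeq) : Prop :=
  Summable (fun mn : ℤ × ℤ => sobWeight s mn * ‖a mn‖ ^ 2)

/-- Membership in `H^∞(𝕋²) = ∩_{s ≥ 0} H^s(𝕋²)`. -/
def InHinf (a : CoefSeq) : Prop := ∀ s : ℝ, 0 ≤ s → InHs s a

/-- The (2π-periodic) function on `ℝ²` represented by the coefficients `a`. -/
def toFun (a : CoefSeq) (x y : ℝ) : ℂ :=
  ∑' mn : ℤ × ℤ, a mn * Complex.exp (Complex.I * ((mn.1 : ℂ) * x + (mn.2 : ℂ) * y))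

/-- The `L^∞(𝕋²)` norm of the function represented by `a`. -/
def supNorm (a : CoefSeq) : ℝ := ⨆ p : ℝ × ℝ, ‖toFun a p.1 p.2‖

/-- Fourier multiplier of `∂ₓ`: `(∂ₓf)^(m,n) = i·m·f̂(m,n)`. -/
def dxOp (a : CoefSeq) : CoefSeq := fun mn => Complex.I * (mn.1 : ℂ) * a mn

/-- Fourier multiplier of `∂_y`: `(∂_yf)^(m,n) = i·n·f̂(m,n)`. -/
def dyOp (a : CoefSeq) : CoefSeq := fun mn => Complex.I * (mn.2 : ℂ) * a mn

/-- The `L^∞(𝕋²)` norm of the spatial gradient `∇f = (∂ₓf, ∂_yf)`. -/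
def gradSupNorm (a : CoefSeq) : ℝ :=
  ⨆ p : ℝ × ℝ, Real.sqrt (‖toFun (dxOp a) p.1 p.2‖ ^ 2 + ‖toFun (dyOp a) p.1 p.2‖ ^ 2)

/-- Fourier multiplier of `𝓗Δ`, where `(𝓗f)^(m,n) = -i·sgn(m)·f̂(m,n)` (zero for `m = 0`)
and `(Δf)^(m,n) = -(m²+n²)·f̂(m,n)`; hence `(𝓗Δf)^(m,n) = i·sgn(m)·(m²+n²)·f̂(m,n)`. -/
def hilbertLap (a : CoefSeq) : CoefSeq := fun mn =>
  Complex.I * (mn.1.sign : ℂ) * (((mn.1 : ℝ) ^ 2 + (mn.2 : ℝ) ^ 2 : ℝ) : ℂ) * a mn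

/-- Fourier coefficients of a product of two functions on the torus (convolution). -/
def convOp (a b : CoefSeq) : CoefSeq := fun mn => ∑' pq : ℤ × ℤ, a pq * b (mn - pq)

/-- The function represented by `a` is real-valued. -/
def RealCoef (a : CoefSeq) : Prop := ∀ mn : ℤ × ℤ, a (-mn) = starRingEnd ℂ (a mn)

/-- `∫₀^{2π} f(x,y) dx = 0` for a.e. `y ∈ 𝕋`. -/
def ZeroXMean (a : CoefSeq) : Prop := ∀ n : ℤ, a (0, n) = 0

/-- `u` solves `u_t + 𝓗Δu + u·uₓ = 0` on the time set `D`, coefficientwise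
(i.e. in the sense of distributions on the torus). -/
def IsSolutionOn (D : Set ℝ) (u : ℝ → CoefSeq) : Prop :=
  ∀ t ∈ D, ∀ mn : ℤ × ℤ,
    HasDerivWithinAt (fun τ => u τ mn)
      (-(hilbertLap (u t) mn) - convOp (u t) (dxOp (u t)) mn) D t

/-- Continuity of `u : D → H^s(𝕋²)`. -/
def ContHsOn (s : ℝ) (D : Set ℝ) (u : ℝ → CoefSeq) : Prop :=
  ∀ t₀ ∈ D, Tendsto (fun t => hsNorm s (fun mn => u t mn - u t₀ mn))
    (nhdsWithin t₀ D) (nhds 0)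

/-- `ψ : ℝ → [0,1]` is a smooth even cutoff, supported in `[-2,2]` and `≡ 1` on `[-1,1]`. -/
def IsCutoff (ψ : ℝ → ℝ) : Prop :=
  ContDiff ℝ (⊤ : ℕ∞) ψ ∧ (∀ x, ψ x ∈ Set.Icc (0:ℝ) 1) ∧ (∀ x, ψ (-x) = ψ x) ∧
  (∀ x, 2 < |x| → ψ x = 0) ∧ (∀ x ∈ Set.Icc (-1:ℝ) 1, ψ x = 1)

/-- Non-stationary phase, two integrations by parts at once. With `p(x) = B x - t x²` and
`w = 1/p'`, the function `G = e^{ip} (-i f w + f' w² + 2 t f w³)` satisfies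
`G' = (f + f'' w² + 6 t f' w³ + 12 t² f w⁴) e^{ip}`, and `G` vanishes at the endpoints. -/
lemma norm_integral_quadratic_phase_le (f f1 f2 : ℝ → ℝ) (hf : ∀ x, HasDerivAt f (f1 x) x)
    (hf1 : ∀ x, HasDerivAt f1 (f2 x) x) (hf2 : Continuous f2) (a b : ℝ) (hab : a ≤ b)
    (hfa : f a = 0) (hfb : f b = 0) (hfa1 : f1 a = 0) (hfb1 : f1 b = 0) (B t K : ℝ)
    (hB : ∀ x ∈ Set.Icc a b, B - 2 * t * x ≠ 0)
    (hK : ∀ x ∈ Set.Icc a b, |f2 x * (B - 2 * t * x)⁻¹ ^ 2 + 6 * t * f1 x * (B - 2 * t * x)⁻¹ ^ 3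
      + 12 * t ^ 2 * f x * (B - 2 * t * x)⁻¹ ^ 4| ≤ K) :
    ‖∫ x in a..b, (f x : ℂ) * Complex.exp (Complex.I * ((B * x - x ^ 2 * t : ℝ) : ℂ))‖
      ≤ K * (b - a) := by
  have hfc : Continuous f := continuous_iff_continuousAt.2 fun x => (hf x).continuousAt
  have hf1c : Continuous f1 := continuous_iff_continuousAt.2 fun x => (hf1 x).continuousAt
  set w : ℝ → ℝ := fun x => (B - 2 * t * x)⁻¹ with hw
  set E : ℝ → ℂ := fun x => Complex.exp (Complex.I * ((B * x - x ^ 2 * t : ℝ) : ℂ)) with hE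
  set R : ℝ → ℝ := fun x => f2 x * w x ^ 2 + 6 * t * f1 x * w x ^ 3 + 12 * t ^ 2 * f x * w x ^ 4
    with hR
  have hEc : Continuous E := by fun_prop
  have hwc : ContinuousOn w (Set.Icc a b) :=
    ContinuousOn.inv₀ (by fun_prop) hB
  have hRc : ContinuousOn R (Set.Icc a b) := by
    have h0 := hfc.continuousOn (s := Set.Icc a b)
    have h1 := hf1c.continuousOn (s := Set.Icc a b)
    have h2 := hf2.continuousOn (s := Set.Icc a b)
    fun_prop
  have hwd : ∀ x ∈ Set.Icc a b, HasDerivAt w (2 * t * w x ^ 2) x := by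
    intro x hx
    have h1 : HasDerivAt (fun x => B - 2 * t * x) (-(2 * t)) x := by
      simpa using ((hasDerivAt_id x).const_mul (2 * t)).const_sub B
    refine (h1.fun_inv (hB x hx)).congr_deriv ?_
    simp only [hw]
    rw [inv_pow]; ring
  have hEd : ∀ x, HasDerivAt E (Complex.I * ((B - 2 * t * x : ℝ) : ℂ) * E x) x := by
    intro x
    have h1 : HasDerivAt (fun x : ℝ => B * x - x ^ 2 * t) (B - 2 * t * x) x := by
      refine (((hasDerivAt_id x).const_mul B).sub
        (((hasDerivAt_id x).pow 2).mul_const t)).congr_deriv ?_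
      simp; ring
    refine ((h1.ofReal_comp.const_mul Complex.I).cexp).congr_deriv ?_
    simp only [hE]; ring
  have hGd : ∀ x ∈ Set.Icc a b, HasDerivAt
      (fun x => E x * (-Complex.I * ((f x * w x : ℝ) : ℂ) +
        ((f1 x * w x ^ 2 + 2 * t * (f x * w x ^ 3) : ℝ) : ℂ)))
      (((f x : ℂ) * E x) + (R x : ℂ) * E x) x := by
    intro x hx
    have h1 := ((hf x).mul (hwd x hx)).ofReal_comp.const_mul (-Complex.I)
    have h2 := (((hf1 x).mul ((hwd x hx).pow 2)).add
      (((hf x).mul ((hwd x hx).pow 3)).const_mul (2 * t))).ofReal_comp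
    refine ((hEd x).mul (h1.add h2)).congr_deriv ?_
    have hI : Complex.I ^ 2 = -1 := Complex.I_sq
    have hBw : ((B : ℂ) - 2 * t * x) * (w x : ℂ) = 1 := by
      have : (B - 2 * t * x) * w x = 1 := mul_inv_cancel₀ (hB x hx)
      exact_mod_cast this
    simp only [hR, Pi.mul_apply, Pi.add_apply, Pi.pow_apply]
    push_cast
    linear_combination (-(f x : ℂ) * E x * ((B : ℂ) - 2 * t * x) * w x) * hI +
      (f x * E x + Complex.I * E x * (f1 x * w x + 2 * t * f x * (w x : ℂ) ^ 2)) * hBw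
  have huI : Set.uIcc a b = Set.Icc a b := Set.uIcc_of_le hab
  have hi1 : IntervalIntegrable (fun x => (f x : ℂ) * E x) volume a b :=
    Continuous.intervalIntegrable (by fun_prop) _ _
  have hi2 : IntervalIntegrable (fun x => (R x : ℂ) * E x) volume a b := by
    apply ContinuousOn.intervalIntegrable
    rw [huI]
    exact (Complex.continuous_ofReal.comp_continuousOn hRc).mul hEc.continuousOn
  have hFTC := intervalIntegral.integral_eq_sub_of_hasDerivAt
    (fun x hx => hGd x (huI ▸ hx)) (hi1.add hi2)
  rw [intervalIntegral.integral_add hi1 hi2] at hFTC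
  simp only [hfa, hfb, hfa1, hfb1, zero_mul, mul_zero, add_zero, Complex.ofReal_zero,
    sub_zero] at hFTC
  rw [eq_neg_of_add_eq_zero_left hFTC, norm_neg]
  have := intervalIntegral.norm_integral_le_of_norm_le_const (a := a) (b := b) (C := K)
    (f := fun x => (R x : ℂ) * E x) ?_
  · rwa [abs_of_nonneg (sub_nonneg.2 hab)] at this
  · intro x hx
    rw [Set.uIoc_of_le hab] at hx
    have hE1 : ‖E x‖ = 1 := by
      simp only [hE]; rw [mul_comm]; exact Complex.norm_exp_ofReal_mul_I _
    rw [norm_mul, hE1, mul_one, Complex.norm_real]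
    exact hK x ⟨hx.1.le, hx.2⟩

/-- The pointwise bound on the remainder, with `w = 1/p'` and derivatives of size `M/N`, `M/N²`. -/
lemma remainder_le (M N n t w g g1 g2 : ℝ) (hN : 0 < N) (hn : 100 ≤ n)
    (ht : |t| ≤ 2 / N) (hw : |w| ≤ 1 / (5 * n)) (hg : |g| ≤ M)
    (hg1 : |g1| ≤ M) (hg2 : |g2| ≤ M) :
    |g2 / N ^ 2 * w ^ 2 + 6 * t * (g1 / N) * w ^ 3 + 12 * t ^ 2 * g * w ^ 4|
      ≤ 2 * M / (25 * n ^ 2 * N ^ 2) := by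
  have hM : 0 ≤ M := (abs_nonneg g).trans hg
  have hw' : |w| ≤ 1 / 500 := hw.trans (one_div_le_one_div_of_le (by norm_num) (by linarith))
  -- `s = t N w` is the size of the relative correction produced by each curvature term.
  set s := t * N * w with hs
  have htN : |t * N| ≤ 2 := by
    rw [abs_mul, abs_of_pos hN]; exact (le_div_iff₀ hN).1 ht
  have hs1 : |s| ≤ 1 / 250 := by
    rw [hs, abs_mul]
    calc |t * N| * |w| ≤ 2 * (1 / 500) := by gcongr
      _ = 1 / 250 := by norm_num
  have e : g2 / N ^ 2 * w ^ 2 + 6 * t * (g1 / N) * w ^ 3 + 12 * t ^ 2 * g * w ^ 4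
      = (w ^ 2 / N ^ 2) * (g2 + 6 * (s * g1) + 12 * (s ^ 2 * g)) := by
    rw [hs]; field_simp
  have h1 : |s * g1| ≤ 1 / 250 * M := by rw [abs_mul]; gcongr
  have h2 : |s ^ 2 * g| ≤ (1 / 250) ^ 2 * M := by rw [abs_mul, abs_pow]; gcongr
  have h3 : |g2 + 6 * (s * g1) + 12 * (s ^ 2 * g)| ≤ 2 * M := by
    rw [abs_le] at *
    constructor <;> linarith [h1.1, h1.2, h2.1, h2.2, hg2.1, hg2.2]
  have h4 : w ^ 2 ≤ (1 / (5 * n)) ^ 2 := by rw [← sq_abs]; gcongr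
  rw [e, abs_mul, abs_of_nonneg (by positivity)]
  calc w ^ 2 / N ^ 2 * |g2 + 6 * (s * g1) + 12 * (s ^ 2 * g)|
      ≤ (1 / (5 * n)) ^ 2 / N ^ 2 * (2 * M) := by gcongr
    _ = 2 * M / (25 * n ^ 2 * N ^ 2) := by
        have : n ≠ 0 := by linarith
        field_simp; ring

/-- **Estimates (3.9)–(3.11) in the proof of Lemma 3.1.** There is `C > 0` such that for
all `j ≥ k ≥ 0`, `y ∈ [0,2π)`, `|t| ≤ 2·2^{-j}` and `|ν| ≥ 100`,
`|∫_ℝ ψ₀²(η/2^k) e^{i[(y-2πν)η - η²t]} dη| ≤ C/ν²`. -/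
theorem oscillatory_integral_tail (ψ : ℝ → ℝ) (hψ : IsCutoff ψ) :
    ∃ C > (0:ℝ), ∀ j k : ℕ, k ≤ j → ∀ y ∈ Set.Ico (0:ℝ) (2 * Real.pi), ∀ t : ℝ,
      |t| ≤ 2 * (((2:ℝ) ^ j))⁻¹ → ∀ ν : ℤ, 100 ≤ |ν| →
      ‖∫ η : ℝ, ((ψ (η / 2 ^ k)) ^ 2 : ℝ) *
          Complex.exp (Complex.I * (((y - 2 * Real.pi * ν) * η - η ^ 2 * t : ℝ) : ℂ))‖ ≤
        C / (ν : ℝ) ^ 2 := by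
  obtain ⟨hsm, -, -, hsupp, -⟩ := hψ
  set φ : ℝ → ℝ := fun x => ψ x ^ 2 with hφ
  have hφs : ContDiff ℝ 2 φ := (contDiff_infty.1 hsm 2).pow 2
  have hφ1s : ContDiff ℝ 1 (deriv φ) := ((contDiff_succ_iff_deriv (n := 1)).1 hφs).2.2
  have hd1 : ∀ x, HasDerivAt φ (deriv φ x) x := fun x =>
    (hφs.differentiable (by norm_num) x).hasDerivAt
  have hd2 : ∀ x, HasDerivAt (deriv φ) (deriv (deriv φ) x) x := fun x =>
    (hφ1s.differentiable (by norm_num) x).hasDerivAt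
  have hc2 : Continuous (deriv (deriv φ)) := hφ1s.continuous_deriv le_rfl
  have hφ0 : ∀ x, 2 < |x| → φ x = 0 := fun x hx => by simp [hφ, hsupp x hx]
  have hφ10 : ∀ x, 2 < |x| → deriv φ x = 0 := fun x hx => by
    have : φ =ᶠ[𝓝 x] fun _ => 0 := by
      filter_upwards [(isOpen_lt continuous_const continuous_abs).mem_nhds hx] with z hz
      exact hφ0 z hz
    rw [this.deriv_eq, deriv_const]
  obtain ⟨M, hM0, hM⟩ : ∃ M > (0:ℝ), ∀ x ∈ Set.Icc (-3:ℝ) 3,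
      |φ x| ≤ M ∧ |deriv φ x| ≤ M ∧ |deriv (deriv φ) x| ≤ M := by
    obtain ⟨M0, h0⟩ := (isCompact_Icc (a := (-3:ℝ)) (b := 3)).exists_bound_of_continuousOn
      hφs.continuous.continuousOn
    obtain ⟨M1, h1⟩ := (isCompact_Icc (a := (-3:ℝ)) (b := 3)).exists_bound_of_continuousOn
      hφ1s.continuous.continuousOn
    obtain ⟨M2, h2⟩ := (isCompact_Icc (a := (-3:ℝ)) (b := 3)).exists_bound_of_continuousOn
      hc2.continuousOn
    simp only [Real.norm_eq_abs] at h0 h1 h2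
    refine ⟨max 1 (max M0 (max M1 M2)), by positivity, fun x hx =>
      ⟨(h0 x hx).trans ?_, (h1 x hx).trans ?_, (h2 x hx).trans ?_⟩⟩ <;> simp
  refine ⟨M, hM0, ?_⟩
  intro j k hkj y hy t ht ν hν
  set N : ℝ := 2 ^ k with hN
  have hN1 : 1 ≤ N := one_le_pow₀ (by norm_num)
  have hN0 : 0 < N := by linarith
  have htN : |t| ≤ 2 / N := by
    refine ht.trans ?_
    rw [div_eq_mul_inv]
    have : N ≤ (2:ℝ) ^ j := pow_le_pow_right₀ (by norm_num) hkj
    gcongr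
  have hn : (100:ℝ) ≤ |(ν:ℝ)| := by exact_mod_cast hν
  set B : ℝ := y - 2 * Real.pi * ν with hB
  have hBl : 6 * |(ν:ℝ)| ≤ |B| := by
    have h1 : |2 * Real.pi * ν| ≤ |B| + |y| := by
      have h := abs_sub_abs_le_abs_sub (2 * Real.pi * (ν:ℝ)) y
      rw [abs_sub_comm, ← hB] at h
      linarith
    rw [abs_mul, abs_of_pos Real.two_pi_pos, abs_of_nonneg hy.1] at h1
    nlinarith [Real.pi_gt_d2, hy.2, hn, mul_le_mul_of_nonneg_right Real.pi_gt_d2.le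
      (by linarith : (0:ℝ) ≤ |(ν:ℝ)| - 1)]
  have hp : ∀ x ∈ Set.Icc (-(3 * N)) (3 * N), 5 * |(ν:ℝ)| ≤ |B - 2 * t * x| := by
    intro x hx
    have hx' : |x| ≤ 3 * N := abs_le.2 hx
    have h1 : |2 * t * x| ≤ 12 := by
      rw [abs_mul, abs_mul, abs_two]
      calc 2 * |t| * |x| ≤ 2 * (2 / N) * (3 * N) := by gcongr
        _ = 12 := by field_simp; norm_num
    have := abs_sub_abs_le_abs_sub B (2 * t * x)
    linarith
  have hx3 : ∀ x ∈ Set.Icc (-(3 * N)) (3 * N), x / N ∈ Set.Icc (-3:ℝ) 3 := by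
    intro x hx
    exact ⟨by rw [le_div_iff₀ hN0]; linarith [hx.1], by rw [div_le_iff₀ hN0]; exact hx.2⟩
  have hdiv : ∀ x, HasDerivAt (fun x : ℝ => x / N) (1 / N) x := fun x =>
    (hasDerivAt_id x).div_const N
  have hscale : ∀ h h' : ℝ → ℝ, (∀ x, HasDerivAt h (h' x) x) →
      ∀ x, HasDerivAt (fun x => h (x / N)) (h' (x / N) / N) x := by
    intro h h' hh x
    have := HasDerivAt.comp (h₂ := h) x (hh (x / N)) (hdiv x)
    rw [mul_one_div] at this
    exact this
  have hg1 := hscale _ _ hd1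
  have hg2 : ∀ x, HasDerivAt (fun x => deriv φ (x / N) / N)
      (deriv (deriv φ) (x / N) / N ^ 2) x := by
    intro x
    have := (hscale _ _ hd2 x).div_const N
    rwa [div_div, ← sq] at this
  have e3 : 3 * N / N = 3 := by field_simp
  have e3' : -(3 * N) / N = -3 := by field_simp
  have key := norm_integral_quadratic_phase_le (fun x => φ (x / N)) (fun x => deriv φ (x / N) / N)
    (fun x => deriv (deriv φ) (x / N) / N ^ 2)
    hg1 hg2
    (by fun_prop) (-(3 * N)) (3 * N) (by linarith)
    (by simp only [e3']; exact hφ0 _ (by norm_num))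
    (by simp only [e3]; exact hφ0 _ (by norm_num))
    (by simp only [e3']; rw [hφ10 _ (by norm_num), zero_div])
    (by simp only [e3]; rw [hφ10 _ (by norm_num), zero_div])
    B t (2 * M / (25 * |(ν:ℝ)| ^ 2 * N ^ 2))
    (fun x hx h => by have := hp x hx; rw [h, abs_zero] at this; linarith)
    (fun x hx => by
      obtain ⟨m0, m1, m2⟩ := hM _ (hx3 x hx)
      refine remainder_le M N _ t _ _ _ _ hN0 hn htN ?_ m0 m1 m2
      rw [abs_inv, ← one_div]
      exact one_div_le_one_div_of_le (by linarith) (hp x hx))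
  have hint : (∫ η : ℝ, ((ψ (η / N)) ^ 2 : ℝ) *
      Complex.exp (Complex.I * ((B * η - η ^ 2 * t : ℝ) : ℂ))) =
      ∫ x in (-(3 * N))..(3 * N), ((φ (x / N) : ℝ) : ℂ) *
        Complex.exp (Complex.I * ((B * x - x ^ 2 * t : ℝ) : ℂ)) := by
    refine (intervalIntegral.integral_eq_integral_of_support_subset ?_).symm
    intro x hx
    by_contra hxN
    apply hx
    have h2 : 2 < |x / N| := by
      rw [abs_div, abs_of_pos hN0, lt_div_iff₀ hN0]
      by_contra! hlt
      rw [abs_le] at hlt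
      exact hxN ⟨by linarith [hlt.1], by linarith [hlt.2]⟩
    have h0 : ψ (x / N) ^ 2 = 0 := hφ0 _ h2
    simp only [h0, Complex.ofReal_zero, zero_mul]
  rw [hint]
  refine key.trans ?_
  rw [sq_abs]
  have hν2 : 0 < (ν:ℝ) ^ 2 := by rw [← sq_abs]; positivity
  have e : 2 * M / (25 * (ν:ℝ) ^ 2 * N ^ 2) * (3 * N - -(3 * N))
      = (12 / 25 / N) * (M / (ν:ℝ) ^ 2) := by
    field_simp; ring
  rw [e]
  refine mul_le_of_le_one_left (by positivity) ?_
  rw [div_le_one hN0]; linarith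
end
end

section
/- Let ψ₀ : ℝ → [0,1] be a smooth even function supported in [−2,2] with ψ₀ ≡ 1 on [−1,1]. There exists a constant C > 0 such that for every integer k ≥ 0, every y' ∈ ℝ, and every t ∈ ℝ with t ≠ 0, one has | ∫_ℝ ψ₀²(η/2^k) e^{i(y'η − η² t)} dη | ≤ C / |t|^{1/2}. -/
/-!
The substitution `η = 2 ^ k x` removes `k`: it suffices to bound
`∫ f(x) e^{i(a x - b x²)} dx` by a constant times `|b|^{-1/2}`, uniformly in `a`, for the fixed
Schwartz function `f = ψ²`.

This bound is the one-dimensional dispersive estimate for the Schrödinger equation. Writing `f` as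
the Fourier transform of `h = 𝓕⁻ f` and moving the transform onto the other factor, the integral
becomes the pairing of `h ∈ L¹` with the Fourier transform of a modulated Gaussian, which is
bounded by `√(π / |b|)`. To keep all integrals absolutely convergent, this is done for the
Gaussian `e^{-z x²}` with `Re z > 0` (`norm_integral_mul_gaussian_le`); the oscillatory case is the
limit `z → i b` by dominated convergence (`norm_integral_mul_chirp_le`). The constant is
`√π ‖𝓕⁻ f‖_{L¹}`, increased by `1` so as to be positive.
-/

open Complex MeasureTheory Filter Topology Set
open scoped Real BigOperators ENNReal

noncomputable section

open FourierTransform in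
/-- The estimate for a modulated Gaussian of complex width `z`, where everything converges
absolutely: moving the Fourier transform off `f` turns the Gaussian into its Fourier transform,
which is bounded by `√(π / ‖z‖)` whatever the modulation frequency `a`. -/
lemma norm_integral_mul_gaussian_le (f : SchwartzMap ℝ ℂ) (a : ℝ) {z : ℂ} (hz : 0 < z.re) :
    ‖∫ x : ℝ, f x * (cexp (I * a * x) * cexp (-z * (x : ℂ) ^ 2))‖ ≤
      (∫ ξ : ℝ, ‖(𝓕⁻ f : SchwartzMap ℝ ℂ) ξ‖) * √(π / ‖z‖) := by
  set h : SchwartzMap ℝ ℂ := 𝓕⁻ f with hh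
  set g : ℝ → ℂ := fun x => cexp (I * a * x) * cexp (-z * (x : ℂ) ^ 2) with hg
  have hgi : Integrable g := by
    refine (integrable_cexp_neg_mul_sq hz).bdd_mul (c := 1) (by fun_prop) ?_
    refine Eventually.of_forall fun x => ?_
    rw [show I * (a : ℂ) * x = ((a * x : ℝ) : ℂ) * I by push_cast; ring]
    exact (norm_exp_ofReal_mul_I _).le
  have hf : 𝓕 (h : ℝ → ℂ) = f := by
    rw [← SchwartzMap.fourier_coe, hh, FourierTransform.fourier_fourierInv_eq]
  have key : ∫ x, f x * g x = ∫ ξ, h ξ * 𝓕 g ξ := by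
    rw [← hf]
    simpa using! VectorFourier.integral_bilin_fourierIntegral_eq_flip (.mul ℂ ℂ) (L := innerₗ ℝ)
      Real.continuous_fourierChar continuous_inner h.integrable hgi
  have hbound (ξ : ℝ) : ‖𝓕 g ξ‖ ≤ √(π / ‖z‖) := by
    -- the Gaussian's transform is evaluated at the real frequency `s`
    set s : ℝ := a - 2 * π * ξ with hs
    have e : 𝓕 g ξ = ∫ x : ℝ, cexp (I * (s : ℂ) * x) * cexp (-z * (x : ℂ) ^ 2) := by
      rw [Real.fourier_real_eq_integral_exp_smul]
      congr 1 with x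
      rw [hg, smul_eq_mul, ← mul_assoc, ← Complex.exp_add]
      congr 2
      rw [hs]; push_cast; ring
    have hnn : 0 ≤ ((s : ℂ) ^ 2 / (4 * z)).re := by
      rw [show (s : ℂ) ^ 2 / (4 * z) = ((s ^ 2 / 4 : ℝ) : ℂ) * z⁻¹ by
        push_cast; rw [div_mul_eq_div_div, div_eq_mul_inv _ z], re_ofReal_mul, inv_re]
      have := normSq_nonneg z
      positivity
    rw [e, fourierIntegral_gaussian hz, norm_mul, Complex.norm_exp]
    have h1 : ‖((π : ℂ) / z) ^ (1 / 2 : ℂ)‖ = √(π / ‖z‖) := by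
      rw [show (1 / 2 : ℂ) = ((1 / 2 : ℝ) : ℂ) by push_cast; ring, norm_cpow_real,
        ← Real.sqrt_eq_rpow, norm_div, norm_real, Real.norm_of_nonneg Real.pi_pos.le]
    have h2 : Real.exp (-(s : ℂ) ^ 2 / (4 * z)).re ≤ 1 := by
      rw [Real.exp_le_one_iff, neg_div, neg_re]
      linarith
    rw [h1]
    exact mul_le_of_le_one_right (Real.sqrt_nonneg _) h2
  rw [key, ← integral_mul_const]
  refine norm_integral_le_of_norm_le (h.integrable.norm.mul_const _) ?_
  refine Eventually.of_forall fun ξ => ?_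
  rw [norm_mul]
  exact mul_le_mul_of_nonneg_left (hbound ξ) (norm_nonneg _)

open FourierTransform in
/-- The one-dimensional dispersive estimate: the limit `z = ε + i b`, `ε ↓ 0`, of the Gaussian
estimate. -/
lemma norm_integral_mul_chirp_le (f : SchwartzMap ℝ ℂ) (a : ℝ) {b : ℝ} (hb : b ≠ 0) :
    ‖∫ x : ℝ, f x * (cexp (I * a * x) * cexp (-(b * I) * (x : ℂ) ^ 2))‖ ≤
      (∫ ξ : ℝ, ‖(𝓕⁻ f : SchwartzMap ℝ ℂ) ξ‖) * √(π / |b|) := by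
  have hlim : Tendsto (fun ε : ℝ => ∫ x : ℝ, f x *
        (cexp (I * a * x) * cexp (-((ε : ℂ) + b * I) * (x : ℂ) ^ 2))) (𝓝[>] 0)
      (𝓝 (∫ x : ℝ, f x * (cexp (I * a * x) * cexp (-(b * I) * (x : ℂ) ^ 2)))) := by
    refine tendsto_integral_filter_of_dominated_convergence (fun x => ‖f x‖) ?_ ?_
      f.integrable.norm ?_
    · have := f.continuous
      exact Eventually.of_forall fun ε => by fun_prop
    · filter_upwards [self_mem_nhdsWithin] with ε (hε : 0 < ε)
      refine Eventually.of_forall fun x => ?_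
      rw [norm_mul, norm_mul, norm_exp, norm_exp]
      have h1 : (I * (a : ℂ) * x).re = 0 := by simp
      have h2 : (-((ε : ℂ) + b * I) * (x : ℂ) ^ 2).re = -(ε * x ^ 2) := by
        rw [← ofReal_pow, re_mul_ofReal]; simp
      rw [h1, h2, Real.exp_zero, one_mul]
      refine mul_le_of_le_one_right (norm_nonneg _) (Real.exp_le_one_iff.2 ?_)
      have : 0 ≤ ε * x ^ 2 := by positivity
      linarith
    · refine Eventually.of_forall fun x => ?_
      have hc : Continuous fun ε : ℝ => f x *
          (cexp (I * a * x) * cexp (-((ε : ℂ) + b * I) * (x : ℂ) ^ 2)) := by fun_prop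
      have := hc.tendsto 0
      simp only [ofReal_zero, zero_add] at this
      exact this.mono_left nhdsWithin_le_nhds
  refine le_of_tendsto hlim.norm ?_
  filter_upwards [self_mem_nhdsWithin] with ε (hε : 0 < ε)
  refine (norm_integral_mul_gaussian_le f a (by simpa using hε)).trans ?_
  refine mul_le_mul_of_nonneg_left (Real.sqrt_le_sqrt ?_) (integral_nonneg fun _ => norm_nonneg _)
  have : |b| ≤ ‖(ε : ℂ) + b * I‖ := by simpa using abs_im_le_norm ((ε : ℂ) + b * I)
  exact div_le_div_of_nonneg_left Real.pi_pos.le (abs_pos.2 hb) this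

/-- **Dispersive bound used in the proof of Lemma 3.1.** There is `C > 0` such that for
every `k ≥ 0`, `y' ∈ ℝ` and `t ≠ 0`,
`|∫_ℝ ψ₀²(η/2^k) e^{i(y'η - η²t)} dη| ≤ C/|t|^{1/2}`. -/
theorem oscillatory_integral_dispersive (ψ : ℝ → ℝ) (hψ : IsCutoff ψ) :
    ∃ C > (0:ℝ), ∀ k : ℕ, ∀ y' t : ℝ, t ≠ 0 →
      ‖∫ η : ℝ, ((ψ (η / 2 ^ k)) ^ 2 : ℝ) *
          Complex.exp (Complex.I * ((y' * η - η ^ 2 * t : ℝ) : ℂ))‖ ≤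
        C / Real.sqrt |t| := by
  obtain ⟨hsm, -, -, hsupp, -⟩ := hψ
  have hcs : HasCompactSupport fun x => ((ψ x ^ 2 : ℝ) : ℂ) := by
    refine HasCompactSupport.intro (isCompact_Icc (a := (-2 : ℝ)) (b := 2)) fun x hx => ?_
    have : 2 < |x| := by
      by_contra! h
      exact hx (abs_le.1 h)
    simp [hsupp x this]
  have hcd : ContDiff ℝ (⊤ : ℕ∞) fun x => ((ψ x ^ 2 : ℝ) : ℂ) :=
    ofRealCLM.contDiff.comp (hsm.pow 2)
  set f : SchwartzMap ℝ ℂ := hcs.toSchwartzMap hcd with hf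
  have hfx (x : ℝ) : f x = ((ψ x ^ 2 : ℝ) : ℂ) := rfl
  set K : ℝ := ∫ ξ : ℝ, ‖(FourierTransformInv.fourierInv f : SchwartzMap ℝ ℂ) ξ‖ with hK
  have hK0 : 0 ≤ K := integral_nonneg fun _ => norm_nonneg _
  -- the summand `1` only serves to make the constant strictly positive
  refine ⟨K * √π + 1, by positivity, fun k y' t ht => ?_⟩
  have hr : (0 : ℝ) < 2 ^ k := by positivity
  have hb : (2 ^ k) ^ 2 * t ≠ 0 := by positivity
  have hmain := norm_integral_mul_chirp_le f (y' * 2 ^ k) hb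
  -- rescaling `η = 2 ^ k x` replaces `(y', t)` by `(2 ^ k y', 4 ^ k t)`
  have hscale := Measure.integral_comp_div (fun x : ℝ => f x *
    (cexp (I * ((y' * 2 ^ k : ℝ) : ℂ) * x) *
      cexp (-((((2 ^ k) ^ 2 * t : ℝ) : ℂ) * I) * (x : ℂ) ^ 2))) ((2 : ℝ) ^ k)
  have hint : (∫ η : ℝ, (((ψ (η / 2 ^ k)) ^ 2 : ℝ) : ℂ) *
      cexp (I * ((y' * η - η ^ 2 * t : ℝ) : ℂ))) = ∫ η : ℝ, f (η / 2 ^ k) *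
      (cexp (I * ((y' * 2 ^ k : ℝ) : ℂ) * ((η / 2 ^ k : ℝ) : ℂ)) *
        cexp (-((((2 ^ k) ^ 2 * t : ℝ) : ℂ) * I) * ((η / 2 ^ k : ℝ) : ℂ) ^ 2)) := by
    congr 1 with η
    rw [hfx, ← Complex.exp_add]
    congr 2
    push_cast
    field_simp
    ring
  rw [hint, hscale, norm_smul, Real.norm_eq_abs, abs_abs, abs_of_pos hr]
  calc (2 : ℝ) ^ k * _ ≤ 2 ^ k * (K * √(π / |(2 ^ k) ^ 2 * t|)) :=
        mul_le_mul_of_nonneg_left hmain hr.le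
    _ = K * √π / √|t| := by
        rw [abs_mul, abs_of_pos (by positivity : (0 : ℝ) < (2 ^ k) ^ 2),
          Real.sqrt_div Real.pi_pos.le, Real.sqrt_mul (by positivity), Real.sqrt_sq hr.le]
        field_simp
    _ ≤ (K * √π + 1) / √|t| := by gcongr; linarith
end
end
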